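/- (Eigenvalue bound, left-focal problem) Let λ ∈ ℝ and suppose u : N[a+1,b] → ℝ is not identically zero and satisfies u(t) = λ ∑_{s=a+2}^{b} G_l(t, s) u(s) for every t with a+1 ≤ t ≤ b (the Green's-function form of the eigenvalue problem ∇_a^α u(t) + λ u(t) = 0 for a+2 ≤ t ≤ b, with ∇_a^{α−1} u(a+1) = 0 and u(b) = 0). Then |λ| ≥ (α − 1)/(b − a − 1)². -/

import Mathlib

/-- Rising factorial `rf x r = Γ(x+r)/Γ(x)`, with the convention `rf 0 r = 0`. -/
noncomputable def rf (x r : ℝ) : ℝ := if x = 0 then 0 else Real.Gamma (x + r) / Real.Gamma x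

/-- The left-focal Green's function. -/
noncomputable def Gl (a b : ℤ) (α : ℝ) (t s : ℤ) : ℝ :=
  if t ≤ s - 1 then
    (1 / Real.Gamma α) *
      (rf (b - s + 1 : ℝ) (α - 1) * rf (t - a : ℝ) (α - 2) / rf (b - a : ℝ) (α - 2))
  else
    (1 / Real.Gamma α) *
      (rf (b - s + 1 : ℝ) (α - 1) * rf (t - a : ℝ) (α - 2) / rf (b - a : ℝ) (α - 2) -
        rf (t - s + 1 : ℝ) (α - 1))

/-!
Log-convexity of `Γ` makes `rf x r` increasing in `x` when `0 ≤ r` and decreasing when `r ≤ 0`.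
With `rf x (α - 1) = x * rf (x + 1) (α - 2)` and `rf 1 (α - 2) = Γ(α) / (α - 1)`, this gives
`0 ≤ Gl a b α t s ≤ (b - a - 1) / (α - 1)`, so every row of the kernel has sum at most
`(b - a - 1)² / (α - 1)`. Evaluating the eigenvalue equation where `‖u‖` is maximal shows that the
reciprocal of any bound on the row sums is a lower bound for the modulus of the eigenvalue.
-/

open Finset

section RisingFactorial

lemma convexOn_map_add_add_map_le {𝕜 : Type*} [Field 𝕜] [LinearOrder 𝕜] [IsStrictOrderedRing 𝕜]
    {D : Set 𝕜} {f : 𝕜 → 𝕜} (hf : ConvexOn 𝕜 D f) {x y r : 𝕜} (hx : x ∈ D) (hyr : y + r ∈ D)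
    (hxy : x ≤ y) (hr : 0 ≤ r) :
    f (x + r) + f y ≤ f x + f (y + r) := by
  rcases hr.eq_or_lt with rfl | hr
  · simp
  have hlen : 0 < y - x + r := by linarith
  set p := (y - x) / (y - x + r) with hp
  set q := r / (y - x + r) with hq
  have hp0 : 0 ≤ p := div_nonneg (sub_nonneg.2 hxy) hlen.le
  have hq0 : 0 ≤ q := div_nonneg hr.le hlen.le
  have hpq : p + q = 1 := by rw [hp, hq]; field_simp
  have hxr : p * x + q * (y + r) = x + r := by rw [hp, hq]; field_simp; ring
  have hy : q * x + p * (y + r) = y := by rw [hp, hq]; field_simp; ring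
  have hfxr := hf.2 hx hyr hp0 hq0 hpq
  have hfy := hf.2 hx hyr hq0 hp0 ((add_comm q p).trans hpq)
  simp only [smul_eq_mul, hxr, hy] at hfxr hfy
  linear_combination hfxr + hfy + (f x + f (y + r)) * hpq

lemma Gamma_add_mul_Gamma_le {x y r : ℝ} (hx : 0 < x) (hxy : x ≤ y) (hr : 0 ≤ r) :
    Real.Gamma (x + r) * Real.Gamma y ≤ Real.Gamma x * Real.Gamma (y + r) := by
  have hΓ {z : ℝ} (hz : 0 < z) : 0 < Real.Gamma z := Real.Gamma_pos_of_pos hz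
  have hΓx := hΓ hx
  have hΓy := hΓ (hx.trans_le hxy)
  have hΓxr := hΓ (add_pos_of_pos_of_nonneg hx hr)
  have hΓyr := hΓ (add_pos_of_pos_of_nonneg (hx.trans_le hxy) hr)
  rw [← Real.log_le_log_iff (by positivity) (by positivity), Real.log_mul hΓxr.ne' hΓy.ne',
    Real.log_mul hΓx.ne' hΓyr.ne']
  exact convexOn_map_add_add_map_le Real.convexOn_log_Gamma hx
    (add_pos_of_pos_of_nonneg (hx.trans_le hxy) hr) hxy hr

lemma rf_of_ne_zero {x : ℝ} (hx : x ≠ 0) (r : ℝ) :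
    rf x r = Real.Gamma (x + r) / Real.Gamma x :=
  if_neg hx

lemma rf_pos {x r : ℝ} (hx : 0 < x) (hxr : 0 < x + r) : 0 < rf x r := by
  rw [rf_of_ne_zero hx.ne']
  exact div_pos (Real.Gamma_pos_of_pos hxr) (Real.Gamma_pos_of_pos hx)

lemma rf_one (r : ℝ) : rf 1 r = Real.Gamma (1 + r) := by
  rw [rf_of_ne_zero one_ne_zero, Real.Gamma_one, div_one]

lemma rf_eq_mul_rf_add_one {x : ℝ} (hx : 0 < x) (r : ℝ) : rf x r = x * rf (x + 1) (r - 1) := by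
  have hΓ : Real.Gamma x ≠ 0 := (Real.Gamma_pos_of_pos hx).ne'
  rw [rf_of_ne_zero hx.ne', rf_of_ne_zero (by positivity), Real.Gamma_add_one hx.ne',
    add_add_sub_cancel]
  field_simp

lemma rf_eq_inv_rf_add_neg {x r : ℝ} (hx : x ≠ 0) (hxr : x + r ≠ 0) :
    rf x r = (rf (x + r) (-r))⁻¹ := by
  rw [rf_of_ne_zero hx, rf_of_ne_zero hxr, add_neg_cancel_right, inv_div]

lemma rf_monotoneOn {r : ℝ} (hr : 0 ≤ r) : MonotoneOn (rf · r) (Set.Ioi 0) := by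
  intro x (hx : 0 < x) y (hy : 0 < y) hxy
  simp only [rf_of_ne_zero hx.ne', rf_of_ne_zero hy.ne']
  rw [div_le_div_iff₀ (Real.Gamma_pos_of_pos hx) (Real.Gamma_pos_of_pos hy),
    mul_comm (Real.Gamma (y + r))]
  exact Gamma_add_mul_Gamma_le hx hxy hr

lemma rf_antitoneOn {r : ℝ} (hr : r ≤ 0) : AntitoneOn (rf · r) (Set.Ioi (-r)) := by
  intro x (hx : -r < x) y (hy : -r < y) hxy
  have hxr : 0 < x + r := by linarith
  have hyr : 0 < y + r := by linarith
  have hrf_le : rf (x + r) (-r) ≤ rf (y + r) (-r) :=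
    rf_monotoneOn (neg_nonneg.2 hr) hxr hyr (by linarith)
  have hrf_pos : 0 < rf (x + r) (-r) := rf_pos hxr (by linarith)
  simp only [rf_eq_inv_rf_add_neg (show x ≠ 0 by linarith) hxr.ne',
    rf_eq_inv_rf_add_neg (show y ≠ 0 by linarith) hyr.ne']
  exact inv_anti₀ hrf_pos hrf_le

end RisingFactorial

section GreenFunction

variable {α : ℝ}

lemma rf_le_rf_mul_rf_div_rf (hα1 : 1 < α) (hα2 : α ≤ 2) {x x' y y' : ℝ} (hx : 0 < x)
    (hxx' : x ≤ x') (hy : 1 ≤ y) (hyy' : y ≤ y') :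
    rf x (α - 1) ≤ rf x' (α - 1) * rf y (α - 2) / rf y' (α - 2) := by
  have hx' : 0 < x' := hx.trans_le hxx'
  rw [le_div_iff₀ (rf_pos (by linarith) (by linarith))]
  exact mul_le_mul (rf_monotoneOn (by linarith) hx hx' hxx')
    (rf_antitoneOn (by linarith) (show -(α - 2) < y by linarith)
      (show -(α - 2) < y' by linarith) hyy')
    (rf_pos (by linarith) (by linarith)).le (rf_pos hx' (by linarith)).le

lemma rf_mul_rf_div_rf_le (hα1 : 1 < α) (hα2 : α ≤ 2) {x y z : ℝ} (hx : 0 < x) (hxz : x ≤ z)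
    (hy : 1 ≤ y) :
    rf x (α - 1) * rf y (α - 2) / rf (z + 1) (α - 2) ≤ z * Real.Gamma (α - 1) := by
  have hz : 0 < z := hx.trans_le hxz
  have hrf_x : rf x (α - 1) ≤ z * rf (z + 1) (α - 2) := by
    calc rf x (α - 1) ≤ rf z (α - 1) := rf_monotoneOn (by linarith) hx hz hxz
      _ = z * rf (z + 1) (α - 2) := by rw [rf_eq_mul_rf_add_one hz]; ring_nf
  have hrf_y : rf y (α - 2) ≤ Real.Gamma (α - 1) := by
    calc rf y (α - 2) ≤ rf 1 (α - 2) :=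
          rf_antitoneOn (by linarith) (show -(α - 2) < 1 by linarith)
            (show -(α - 2) < y by linarith) hy
      _ = Real.Gamma (α - 1) := by rw [rf_one]; ring_nf
  have hrf_z : 0 < rf (z + 1) (α - 2) := rf_pos (by linarith) (by linarith)
  have hrf_y_nonneg : 0 ≤ rf y (α - 2) := (rf_pos (by linarith) (by linarith)).le
  rw [div_le_iff₀ hrf_z, mul_right_comm]
  exact mul_le_mul hrf_x hrf_y hrf_y_nonneg (by positivity)

variable {a b t s : ℤ}

lemma Gl_nonneg (hα1 : 1 < α) (hα2 : α ≤ 2) (hat : a + 1 ≤ t) (htb : t ≤ b) (hsb : s ≤ b) :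
    0 ≤ Gl a b α t s := by
  have hat' : (a : ℝ) + 1 ≤ t := mod_cast hat
  have htb' : (t : ℝ) ≤ b := mod_cast htb
  have hsb' : (s : ℝ) ≤ b := mod_cast hsb
  have hΓ : 0 ≤ 1 / Real.Gamma α := one_div_nonneg.2 (Real.Gamma_pos_of_pos (by linarith)).le
  unfold Gl
  split_ifs with hts
  · have hrf_s := rf_pos (x := b - s + 1) (r := α - 1) (by linarith) (by linarith)
    have hrf_t := rf_pos (x := t - a) (r := α - 2) (by linarith) (by linarith)
    have hrf_b := rf_pos (x := b - a) (r := α - 2) (by linarith) (by linarith)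
    positivity
  · have hst : (s : ℝ) ≤ t := mod_cast (by omega : s ≤ t)
    exact mul_nonneg hΓ <| sub_nonneg.2 <| rf_le_rf_mul_rf_div_rf hα1 hα2 (by linarith)
      (by linarith) (by linarith) (by linarith)

lemma Gl_le (hα1 : 1 < α) (hα2 : α ≤ 2) (hat : a + 1 ≤ t) (has : a + 2 ≤ s) (hsb : s ≤ b) :
    Gl a b α t s ≤ (b - a - 1) / (α - 1) := by
  have hat' : (a : ℝ) + 1 ≤ t := mod_cast hat
  have has' : (a : ℝ) + 2 ≤ s := mod_cast has
  have hsb' : (s : ℝ) ≤ b := mod_cast hsb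
  have hα : 0 < α - 1 := sub_pos.2 hα1
  have hΓ_pos : 0 < Real.Gamma (α - 1) := Real.Gamma_pos_of_pos hα
  have hΓ : Real.Gamma α = (α - 1) * Real.Gamma (α - 1) := by
    rw [← Real.Gamma_add_one hα.ne', sub_add_cancel]
  have hproduct : rf (b - s + 1) (α - 1) * rf (t - a) (α - 2) / rf (b - a) (α - 2) ≤
      (b - a - 1) * Real.Gamma (α - 1) := by
    simpa only [sub_add_cancel] using rf_mul_rf_div_rf_le (z := b - a - 1) hα1 hα2
      (by linarith : (0 : ℝ) < b - s + 1) (by linarith) (by linarith : (1 : ℝ) ≤ t - a)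
  have hscaled {v : ℝ} (hv : v ≤ (b - a - 1) * Real.Gamma (α - 1)) :
      1 / Real.Gamma α * v ≤ (b - a - 1) / (α - 1) := by
    rw [hΓ, one_div_mul_eq_div, ← mul_div_mul_right _ (α - 1) hΓ_pos.ne']
    gcongr
  unfold Gl
  split_ifs with hts
  · exact hscaled hproduct
  · have hst : (s : ℝ) ≤ t := mod_cast (by omega : s ≤ t)
    have hrf : 0 < rf (t - s + 1) (α - 1) := rf_pos (by linarith) (by linarith)
    exact hscaled ((sub_le_self _ hrf.le).trans hproduct)

lemma sum_norm_Gl_le (hα1 : 1 < α) (hα2 : α ≤ 2) (hat : a + 1 ≤ t) (htb : t ≤ b) :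
    ∑ s ∈ Icc (a + 2) b, ‖Gl a b α t s‖ ≤ (b - a - 1 : ℝ) ^ 2 / (α - 1) := by
  have hcard : (#(Icc (a + 2) b) : ℝ) = b - a - 1 := by
    have hcard_int : (#(Icc (a + 2) b) : ℤ) = b - a - 1 := by
      rw [Int.card_Icc_of_le _ _ (by omega)]
      ring
    exact_mod_cast congrArg (Int.cast : ℤ → ℝ) hcard_int
  calc ∑ s ∈ Icc (a + 2) b, ‖Gl a b α t s‖
      ≤ #(Icc (a + 2) b) • ((b - a - 1 : ℝ) / (α - 1)) := by
        refine sum_le_card_nsmul _ _ _ fun s hs ↦ ?_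
        obtain ⟨has, hsb⟩ := mem_Icc.1 hs
        rw [Real.norm_of_nonneg (Gl_nonneg hα1 hα2 hat htb hsb)]
        exact Gl_le hα1 hα2 hat has hsb
    _ = (b - a - 1 : ℝ) ^ 2 / (α - 1) := by
        rw [nsmul_eq_mul, hcard]
        ring

end GreenFunction

lemma one_le_norm_mul_of_eq_smul_sum {ι R S E : Type*} [SeminormedRing R] [SeminormedRing S]
    [NormedAddCommGroup E] [Module R E] [IsBoundedSMul R E] [Module S E] [IsBoundedSMul S E]
    {I J : Finset ι} (hJI : J ⊆ I) {K : ι → ι → S} {C : ℝ}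
    (hK : ∀ t ∈ I, ∑ s ∈ J, ‖K t s‖ ≤ C) {lam : R} {u : ι → E} (hu : ∃ t ∈ I, u t ≠ 0)
    (heq : ∀ t ∈ I, u t = lam • ∑ s ∈ J, K t s • u s) : 1 ≤ ‖lam‖ * C := by
  obtain ⟨t₀, ht₀, hut₀⟩ := hu
  obtain ⟨t, ht, hmax⟩ := exists_max_image I (‖u ·‖) ⟨t₀, ht₀⟩
  have hut : 0 < ‖u t‖ := (norm_pos_iff.2 hut₀).trans_le (hmax t₀ ht₀)
  have hsum : ‖∑ s ∈ J, K t s • u s‖ ≤ C * ‖u t‖ := by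
    calc ‖∑ s ∈ J, K t s • u s‖ ≤ ∑ s ∈ J, ‖K t s‖ * ‖u t‖ :=
          norm_sum_le_of_le _ fun s hs ↦ (norm_smul_le _ _).trans <| by
            gcongr
            exact hmax s (hJI hs)
      _ = (∑ s ∈ J, ‖K t s‖) * ‖u t‖ := (sum_mul ..).symm
      _ ≤ C * ‖u t‖ := by gcongr; exact hK t ht
  refine le_of_mul_le_mul_right ?_ hut
  calc 1 * ‖u t‖ = ‖lam • ∑ s ∈ J, K t s • u s‖ := by rw [one_mul, ← heq t ht]
    _ ≤ ‖lam‖ * ‖∑ s ∈ J, K t s • u s‖ := norm_smul_le _ _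
    _ ≤ ‖lam‖ * (C * ‖u t‖) := by gcongr
    _ = ‖lam‖ * C * ‖u t‖ := (mul_assoc ..).symm

theorem left_focal_eigenvalue_bound_general {𝕜 E : Type*} [NormedField 𝕜] [NormedAddCommGroup E]
    [NormedSpace 𝕜 E] [NormedSpace ℝ E] {a b : ℤ} {α : ℝ} (hα1 : 1 < α) (hα2 : α ≤ 2)
    {lam : 𝕜} {u : ℤ → E} (hu : ∃ t : ℤ, a + 1 ≤ t ∧ t ≤ b ∧ u t ≠ 0)
    (heq : ∀ t : ℤ, a + 1 ≤ t → t ≤ b →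
      u t = lam • ∑ s ∈ Icc (a + 2) b, Gl a b α t s • u s) :
    (α - 1) / ((b - a - 1 : ℝ)) ^ 2 ≤ ‖lam‖ := by
  have hone_le : 1 ≤ ‖lam‖ * ((b - a - 1 : ℝ) ^ 2 / (α - 1)) :=
    one_le_norm_mul_of_eq_smul_sum (I := Icc (a + 1) b) (J := Icc (a + 2) b)
      (Icc_subset_Icc_left (by omega))
      (fun t ht ↦ sum_norm_Gl_le hα1 hα2 (mem_Icc.1 ht).1 (mem_Icc.1 ht).2)
      (by simpa only [mem_Icc, and_assoc] using hu)
      (fun t ht ↦ heq t (mem_Icc.1 ht).1 (mem_Icc.1 ht).2)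
  rw [← mul_div_assoc, one_le_div (sub_pos.2 hα1)] at hone_le
  exact div_le_of_le_mul₀ (sq_nonneg _) (norm_nonneg _) hone_le

theorem left_focal_eigenvalue_bound (a b : ℤ) (hab : 2 ≤ b - a) (α : ℝ)
    (hα1 : 1 < α) (hα2 : α < 2) (lam : ℝ) (u : ℤ → ℝ)
    (hu : ∃ t : ℤ, a + 1 ≤ t ∧ t ≤ b ∧ u t ≠ 0)
    (heq : ∀ t : ℤ, a + 1 ≤ t → t ≤ b →
      u t = lam * ∑ s ∈ Finset.Icc (a + 2) b, Gl a b α t s * u s) :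
    (α - 1) / ((b - a - 1 : ℝ)) ^ 2 ≤ |lam| :=
  left_focal_eigenvalue_bound_general (lam := lam) hα1 hα2.le hu heq
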